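/- The 𝒪-lattice Λ⁴ contains exactly 240 3-vectors and exactly 2160 6-vectors, and the unitary group U(Λ⁴) acts transitively on the set of 3-vectors of Λ⁴ and transitively on the set of 6-vectors of Λ⁴. -/

import Mathlib

open Polynomial

noncomputable section

/-- The Eisenstein ring `𝒪 = ℤ[ω]`, where `ω = e^{2πi/6}` is a primitive sixth root of
unity (so `ω² - ω + 1 = 0`), presented as `ℤ[X]/(X² - X + 1)`. -/
abbrev O : Type := AdjoinRoot (X ^ 2 - X + 1 : ℤ[X])

/-- `ω`, the distinguished primitive sixth root of unity in `𝒪`. -/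
def ω : O := AdjoinRoot.root _

lemma ω_sq : ω ^ 2 - ω + 1 = 0 := by
  have h := AdjoinRoot.eval₂_root (X ^ 2 - X + 1 : ℤ[X])
  simpa [ω, eval₂_add, eval₂_sub, eval₂_pow, eval₂_X, eval₂_one] using h

/-- Complex conjugation on the Eisenstein ring: the ring involution with
`conj ω = 1 - ω = ω⁻¹`. -/
def conj : O →+* O :=
  AdjoinRoot.lift (algebraMap ℤ O) (1 - ω) (by
    have h := ω_sq
    simp only [eval₂_add, eval₂_sub, eval₂_pow, eval₂_X, eval₂_one]
    ring_nf
    ring_nf at h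
    linear_combination h)

/-- `θ := ω - ω⁻¹ = ω - conj ω = 2ω - 1`, a square root of `-3` in `𝒪`. -/
def θ : O := ω - conj ω

/-- The Gram matrix of the 𝒪-lattice `Λᵏ` on its basis `r₁,…,r_k`:
`ψ(rᵢ,rᵢ) = 3`, `ψ(rᵢ,rᵢ₊₁) = θ`, `ψ(rᵢ,rⱼ) = 0` for `j > i+1`, and Hermitian symmetry
(`ψ(rᵢ₊₁,rᵢ) = conj θ`). -/
def gram (k : ℕ) : Fin k → Fin k → O := fun i j =>
  if i = j then 3
  else if (i : ℕ) + 1 = (j : ℕ) then θ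
  else if (j : ℕ) + 1 = (i : ℕ) then conj θ
  else 0

/-- The Hermitian form of `Λᵏ`, modelled on `Fin k → 𝒪` (coordinates with respect to the
basis `r₁,…,r_k`): 𝒪-linear in the first variable, conjugate-linear in the second. -/
def psi (k : ℕ) (x y : Fin k → O) : O :=
  ∑ i : Fin k, ∑ j : Fin k, x i * conj (y j) * gram k i j

/-- `g` belongs to the unitary group `U(Λᵏ)`: an 𝒪-module automorphism of `Λᵏ`
preserving the Hermitian form `ψ`. -/
def IsUnitary (k : ℕ) (g : (Fin k → O) ≃ₗ[O] (Fin k → O)) : Prop :=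
  ∀ x y, psi k (g x) (g y) = psi k x y

/-- The basis vector `rᵢ` of `Λᵏ` (indexing from `0`, so `r k i` is `r_{i+1}`). -/
def r (k : ℕ) (i : Fin k) : Fin k → O := Pi.single i 1

lemma ω_sq' : ω ^ 2 = ω - 1 := by linear_combination ω_sq

lemma conj_ω : conj ω = 1 - ω := by
  unfold conj
  conv_lhs => unfold ω
  exact AdjoinRoot.lift_root _

lemma conj_θ : conj θ = - θ := by
  simp only [θ, map_sub, conj_ω, map_one]; ring

lemma θ_eq : θ = 2 * ω - 1 := by
  simp only [θ, conj_ω]; ring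

abbrev E : Type := ℤ × ℤ
abbrev V : Type := E × E × E × E

def toO (e : E) : O := (e.1 : O) + (e.2 : O) * ω

lemma poly_monic : (X ^ 2 - X + 1 : ℤ[X]).Monic := by monicity!

lemma poly_natDegree : (X ^ 2 - X + 1 : ℤ[X]).natDegree = 2 := by compute_degree!

lemma toO_zero (a b : ℤ) (h : (a : O) + (b : O) * ω = 0) : a = 0 ∧ b = 0 := by
  have h1 : AdjoinRoot.mk (X ^ 2 - X + 1 : ℤ[X]) (C b * X + C a) = 0 := by
    rw [map_add, map_mul, AdjoinRoot.mk_C, AdjoinRoot.mk_C, AdjoinRoot.mk_X]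
    have : ∀ z : ℤ, AdjoinRoot.of (X ^ 2 - X + 1 : ℤ[X]) z = (z : O) := fun z => by simp
    rw [this, this, ← h, ω]; ring
  rw [AdjoinRoot.mk_eq_zero] at h1
  have h2 : (C b * X + C a : ℤ[X]) = 0 := by
    by_contra h0
    refine poly_monic.not_dvd_of_natDegree_lt h0 ?_ h1
    rw [poly_natDegree]
    exact lt_of_le_of_lt natDegree_linear_le (by norm_num)
  have ha := congrArg (fun p => coeff p 0) h2
  have hb := congrArg (fun p => coeff p 1) h2
  simp only [coeff_add, coeff_C_mul, coeff_X, coeff_C, coeff_zero] at ha hb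
  norm_num at ha hb
  exact ⟨ha, hb⟩

lemma toO_inj : Function.Injective toO := by
  intro p q h
  have h' := toO_zero (p.1 - q.1) (p.2 - q.2) (by
    simp only [toO] at h; push_cast; linear_combination h)
  exact Prod.ext (by omega) (by omega)

lemma intCast_O_inj (a b : ℤ) (h : (a : O) = (b : O)) : a = b := by
  have := toO_zero (a - b) 0 (by push_cast; linear_combination h)
  omega

lemma toO_surj : Function.Surjective toO := by
  intro z
  induction z using AdjoinRoot.induction_on with
  | ih p =>
    induction p using Polynomial.induction_on' with
    | add p q hp hq =>
      obtain ⟨a, ha⟩ := hp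
      obtain ⟨b, hb⟩ := hq
      exact ⟨a + b, by rw [map_add, ← ha, ← hb]; simp only [toO, Prod.fst_add, Prod.snd_add]; push_cast; ring⟩
    | monomial n c =>
      induction n with
      | zero => exact ⟨(c, 0), by simp [toO]⟩
      | succ n ih =>
        obtain ⟨e, he⟩ := ih
        refine ⟨(-e.2, e.1 + e.2), ?_⟩
        rw [← monomial_mul_X, map_mul, ← he, AdjoinRoot.mk_X]
        change _ = _ * ω
        simp only [toO]; push_cast
        linear_combination (-(e.2 : O)) * ω_sq'

def φ (v : V) : Fin 4 → O := ![toO v.1, toO v.2.1, toO v.2.2.1, toO v.2.2.2]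

lemma φ_inj : Function.Injective φ := by
  intro v w h
  have h0 := toO_inj (congrFun h 0)
  have h1 := toO_inj (congrFun h 1)
  have h2 := toO_inj (congrFun h 2)
  have h3 := toO_inj (congrFun h 3)
  exact Prod.ext h0 (Prod.ext h1 (Prod.ext h2 h3))

lemma φ_surj : Function.Surjective φ := by
  intro x
  obtain ⟨a, ha⟩ := toO_surj (x 0)
  obtain ⟨b, hb⟩ := toO_surj (x 1)
  obtain ⟨c, hc⟩ := toO_surj (x 2)
  obtain ⟨d, hd⟩ := toO_surj (x 3)
  refine ⟨(a, b, c, d), ?_⟩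
  funext i
  fin_cases i <;> simp [φ, *]

lemma psi4 (x y : Fin 4 → O) : psi 4 x y =
    3 * (x 0 * conj (y 0) + x 1 * conj (y 1) + x 2 * conj (y 2) + x 3 * conj (y 3))
    + (2 * ω - 1) * (x 0 * conj (y 1) + x 1 * conj (y 2) + x 2 * conj (y 3)
      - x 1 * conj (y 0) - x 2 * conj (y 1) - x 3 * conj (y 2)) := by
  simp only [psi, Fin.sum_univ_four, gram, conj_θ, ← θ_eq]
  simp
  ring

/-- norm of an Eisenstein integer -/
def nrm (e : E) : ℤ := e.1 * e.1 + e.1 * e.2 + e.2 * e.2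

abbrev Y : Type := Σ _ : E, Σ _ : E, Σ _ : E, E

/-- tetracode coordinates `(y₄, y₃, y₁, y₂)` -/
def toY : V → Y := fun ⟨⟨a1, b1⟩, ⟨a2, b2⟩, ⟨a3, b3⟩, ⟨a4, b4⟩⟩ =>
  ⟨(a4, b4), (a2 + a4, b2 + b4), (-a1 - 2 * b1 + a2, 2 * a1 + b1 + b2),
    (a2 + a3 + 2 * b3 - a4, b2 - 2 * a3 - b3 - b4)⟩

def divθ (a b : ℤ) : E := ((a + 2 * b) / 3, (-2 * a - b) / 3)

def toV : Y → V := fun ⟨⟨p4, q4⟩, ⟨p3, q3⟩, ⟨p1, q1⟩, ⟨p2, q2⟩⟩ =>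
  (divθ (p1 - (p3 - p4)) (q1 - (q3 - q4)), (p3 - p4, q3 - q4),
    divθ ((p3 - p4) - p4 - p2) ((q3 - q4) - q4 - q2), (p4, q4))

def Q (v : V) : ℤ :=
  nrm (toY v).1 + nrm (toY v).2.1 + nrm (toY v).2.2.1 + nrm (toY v).2.2.2

lemma conj_toO (e : E) : conj (toO e) = (e.1 : O) + (e.2 : O) * (1 - ω) := by
  simp [toO, conj_ω]

lemma psi_φ (v : V) : psi 4 (φ v) (φ v) = (Q v : O) := by
  obtain ⟨⟨a1, b1⟩, ⟨a2, b2⟩, ⟨a3, b3⟩, ⟨a4, b4⟩⟩ := v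
  have h := ω_sq'
  have h3 : ω ^ 3 = -1 := by linear_combination (ω + 1) * h
  rw [psi4]
  simp only [φ, Q, toY, nrm, Matrix.cons_val, conj_toO]
  simp only [toO]
  push_cast
  ring_nf
  simp only [h]
  ring

def B : List E :=
  [(0, 0), (1, 0), (0, 1), (-1, 1), (-1, 0), (0, -1), (1, -1),
   (1, 1), (-1, 2), (-2, 1), (-1, -1), (1, -2), (2, -1),
   (2, 0), (0, 2), (-2, 2), (-2, 0), (0, -2), (2, -2)]

lemma nrm_nonneg (e : E) : 0 ≤ nrm e := by
  unfold nrm; nlinarith [sq_nonneg (e.1 + e.2), sq_nonneg e.1, sq_nonneg e.2]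

lemma mem_B (e : E) (h : nrm e ≤ 6) : e ∈ B := by
  obtain ⟨a, b⟩ := e
  simp only [nrm] at h
  have h1 : a ≤ 2 := by nlinarith [sq_nonneg (a + 2 * b)]
  have h2 : -2 ≤ a := by nlinarith [sq_nonneg (a + 2 * b)]
  have h3 : b ≤ 2 := by nlinarith [sq_nonneg (b + 2 * a)]
  have h4 : -2 ≤ b := by nlinarith [sq_nonneg (b + 2 * a)]
  interval_cases a <;> interval_cases b <;> first | (exfalso; omega) | decide

/-- residue modulo `θ` -/
def res (e : E) : ℤ := e.1 - e.2

/-- elements of norm at most 6, with norm and residue modulo `θ` -/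
abbrev D : Type := E × ℕ × ℕ

def toD (e : E) : D := (e, (nrm e).toNat, (res e % 3).toNat)

def BD : List D :=
  [((0, 0), 0, 0), ((1, 0), 1, 1), ((0, 1), 1, 2), ((-1, 1), 1, 1), ((-1, 0), 1, 2),
   ((0, -1), 1, 1), ((1, -1), 1, 2), ((1, 1), 3, 0), ((-1, 2), 3, 0), ((-2, 1), 3, 0),
   ((-1, -1), 3, 0), ((1, -2), 3, 0), ((2, -1), 3, 0), ((2, 0), 4, 2), ((0, 2), 4, 1),
   ((-2, 2), 4, 2), ((-2, 0), 4, 1), ((0, -2), 4, 2), ((2, -2), 4, 1)]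

lemma mem_BD (e : E) (h : nrm e ≤ 6) : toD e ∈ BD := by
  have h1 := mem_B e h
  have h2 : ∀ e ∈ B, toD e ∈ BD := by decide
  exact h2 e h1

lemma BD_eq (d : D) (h : d ∈ BD) : ∃ e, d = toD e := by
  have h2 : ∀ d ∈ BD, d = toD d.1 := by decide
  exact ⟨_, h2 d h⟩

abbrev Y' : Type := Σ _ : D, Σ _ : D, Σ _ : D, D

def lift (y : Y) : Y' := ⟨toD y.1, toD y.2.1, toD y.2.2.1, toD y.2.2.2⟩
def low (t : Y') : Y := ⟨t.1.1, t.2.1.1, t.2.2.1.1, t.2.2.2.1⟩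

def T (n : ℕ) : List Y' :=
  BD.sigma fun y4 => (BD.filter fun y3 => Nat.ble (y3.2.1 + y4.2.1) n).sigma fun y3 =>
    (BD.filter fun y1 => Nat.ble (y1.2.1 + (y3.2.1 + y4.2.1)) n &&
        Nat.beq ((y1.2.2 + 2 * y3.2.2 + y4.2.2) % 3) 0).sigma
      fun y1 => BD.filter fun y2 => Nat.beq (y2.2.1 + (y1.2.1 + (y3.2.1 + y4.2.1))) n &&
        Nat.beq ((y2.2.2 + 2 * y3.2.2 + 2 * y4.2.2) % 3) 0

lemma T_nodup (n : ℕ) : (T n).Nodup := by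
  have hB : BD.Nodup := by decide
  exact hB.sigma fun _ => (hB.filter _).sigma fun _ => (hB.filter _).sigma fun _ => hB.filter _

lemma toV_toY (v : V) : toV (toY v) = v := by
  obtain ⟨⟨a1, b1⟩, ⟨a2, b2⟩, ⟨a3, b3⟩, ⟨a4, b4⟩⟩ := v
  refine Prod.ext (Prod.ext ?_ ?_) (Prod.ext (Prod.ext ?_ ?_)
    (Prod.ext (Prod.ext ?_ ?_) (Prod.ext ?_ ?_)))
  all_goals simp only [toY, toV, divθ]
  all_goals omega

lemma mem_T (n : ℕ) (hn : n ≤ 6) (v : V) (h : Q v = n) : lift (toY v) ∈ T n := by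
  have hQ := h
  unfold Q at hQ
  have h1 := nrm_nonneg (toY v).1
  have h2 := nrm_nonneg (toY v).2.1
  have h3 := nrm_nonneg (toY v).2.2.1
  have h4 := nrm_nonneg (toY v).2.2.2
  simp only [T, lift, List.mem_sigma, List.mem_filter, Bool.and_eq_true, Nat.ble_eq, Nat.beq_eq]
  refine ⟨mem_BD _ (by omega), ⟨mem_BD _ (by omega), by simp only [toD]; omega⟩,
    ⟨mem_BD _ (by omega), by simp only [toD]; omega, ?_⟩, mem_BD _ (by omega),
    by simp only [toD]; omega, ?_⟩
  · obtain ⟨⟨a1, b1⟩, ⟨a2, b2⟩, ⟨a3, b3⟩, ⟨a4, b4⟩⟩ := v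
    simp only [toY, res, toD]; omega
  · obtain ⟨⟨a1, b1⟩, ⟨a2, b2⟩, ⟨a3, b3⟩, ⟨a4, b4⟩⟩ := v
    simp only [toY, res, toD]; omega

lemma of_mem_T (n : ℕ) (t : Y') (h : t ∈ T n) :
    Q (toV (low t)) = n ∧ lift (toY (toV (low t))) = t := by
  obtain ⟨y4, y3, y1, y2⟩ := t
  simp only [T, List.mem_sigma, List.mem_filter, Bool.and_eq_true, Nat.ble_eq, Nat.beq_eq] at h
  obtain ⟨h4, ⟨h3, -⟩, ⟨h1, -, r1⟩, h2, hs, r2⟩ := h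
  obtain ⟨e4, rfl⟩ := BD_eq _ h4
  obtain ⟨e3, rfl⟩ := BD_eq _ h3
  obtain ⟨e1, rfl⟩ := BD_eq _ h1
  obtain ⟨e2, rfl⟩ := BD_eq _ h2
  have key : toY (toV ⟨e4, e3, e1, e2⟩) = ⟨e4, e3, e1, e2⟩ := by
    obtain ⟨p4, q4⟩ := e4
    obtain ⟨p3, q3⟩ := e3
    obtain ⟨p1, q1⟩ := e1
    obtain ⟨p2, q2⟩ := e2
    simp only [toD, res] at r1 r2
    simp only [toY, toV, divθ]
    congr 1
    refine Sigma.ext ?_ (heq_of_eq (Sigma.ext ?_ (heq_of_eq ?_)))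
    all_goals refine Prod.ext ?_ ?_
    all_goals dsimp only
    all_goals omega
  have hl : low ⟨toD e4, toD e3, toD e1, toD e2⟩ = ⟨e4, e3, e1, e2⟩ := rfl
  rw [hl]
  refine ⟨?_, by rw [key]; rfl⟩
  unfold Q
  rw [key]
  simp only [toD] at hs
  have := nrm_nonneg e1
  have := nrm_nonneg e2
  have := nrm_nonneg e3
  have := nrm_nonneg e4
  dsimp only
  omega

lemma count (n : ℕ) (hn : n ≤ 6) :
    Set.ncard {x : Fin 4 → O | psi 4 x x = (n : O)} = (T n).length := by
  have hc' := of_mem_T n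
  have hS : {x : Fin 4 → O | psi 4 x x = (n : O)} =
      (fun t => φ (toV (low t))) '' ((T n).toFinset : Set Y') := by
    ext x
    simp only [Set.mem_ofPred_eq, Set.mem_image, List.coe_toFinset]
    constructor
    · intro hx
      obtain ⟨v, rfl⟩ := φ_surj x
      rw [psi_φ] at hx
      refine ⟨lift (toY v), mem_T n hn v (intCast_O_inj _ _ (by exact_mod_cast hx)), ?_⟩
      change φ (toV (toY v)) = _
      rw [toV_toY]
    · rintro ⟨t, ht, rfl⟩
      rw [psi_φ, (hc' t ht).1]; simp
  rw [hS, Set.InjOn.ncard_image, Set.ncard_coe_finset, List.toFinset_card_of_nodup (T_nodup n)]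
  intro s hs t ht hst
  simp only [List.coe_toFinset, Set.mem_ofPred_eq] at hs ht
  rw [← (hc' s hs).2, ← (hc' t ht).2, φ_inj hst]

/-! The generating triflections. -/

def Rf (i : Fin 4) (x : Fin 4 → O) : Fin 4 → O :=
  match i with
  | 0 => ![(ω - 1) * x 0 + ω * x 1, x 1, x 2, x 3]
  | 1 => ![x 0, (ω - 1) * x 1 + ω * (x 2 - x 0), x 2, x 3]
  | 2 => ![x 0, x 1, (ω - 1) * x 2 + ω * (x 3 - x 1), x 3]
  | 3 => ![x 0, x 1, x 2, (ω - 1) * x 3 - ω * x 2]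

lemma Rf_add (i : Fin 4) (x y : Fin 4 → O) : Rf i (x + y) = Rf i x + Rf i y := by
  fin_cases i <;> funext j <;> fin_cases j <;> simp [Rf] <;> ring

lemma Rf_smul (i : Fin 4) (c : O) (x : Fin 4 → O) : Rf i (c • x) = c • Rf i x := by
  fin_cases i <;> funext j <;> fin_cases j <;> simp [Rf] <;> ring

lemma Rf_cube (i : Fin 4) (x : Fin 4 → O) : Rf i (Rf i (Rf i x)) = x := by
  have h := ω_sq'
  have h3 : ω ^ 3 = -1 := by linear_combination (ω + 1) * h
  fin_cases i <;> funext j <;> fin_cases j <;> simp [Rf] <;> grind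

lemma Rf_psi (i : Fin 4) (x y : Fin 4 → O) : psi 4 (Rf i x) (Rf i y) = psi 4 x y := by
  have h := ω_sq'
  fin_cases i <;> simp only [psi4] <;> simp [Rf, conj_ω] <;> grind

def Rl (i : Fin 4) : (Fin 4 → O) ≃ₗ[O] (Fin 4 → O) where
  toFun := Rf i
  map_add' := Rf_add i
  map_smul' := Rf_smul i
  invFun := fun x => Rf i (Rf i x)
  left_inv := Rf_cube i
  right_inv := Rf_cube i

def Reach (x y : Fin 4 → O) : Prop :=
  ∃ g : (Fin 4 → O) ≃ₗ[O] (Fin 4 → O), IsUnitary 4 g ∧ g x = y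

lemma Reach.refl (x : Fin 4 → O) : Reach x x := ⟨LinearEquiv.refl O _, fun _ _ => rfl, rfl⟩

lemma Reach.symm {x y : Fin 4 → O} (h : Reach x y) : Reach y x := by
  obtain ⟨g, hg, rfl⟩ := h
  exact ⟨g.symm, fun a b => by rw [← hg]; simp, by simp⟩

lemma Reach.trans {x y z : Fin 4 → O} (h : Reach x y) (h' : Reach y z) : Reach x z := by
  obtain ⟨g, hg, rfl⟩ := h
  obtain ⟨g', hg', rfl⟩ := h'
  exact ⟨g.trans g', fun a b => (hg' _ _).trans (hg _ _), by simp⟩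

lemma reach_Rf (i : Fin 4) (x : Fin 4 → O) : Reach x (Rf i x) := ⟨Rl i, Rf_psi i, rfl⟩

lemma reach_psi {x y : Fin 4 → O} (h : Reach x y) : psi 4 y y = psi 4 x x := by
  obtain ⟨g, hg, rfl⟩ := h
  exact hg x x

/-- `ω ^ 2 * p + ω * d` -/
def comb (p d : E) : E := (-p.1 - p.2 - d.2, p.1 + d.1 + d.2)

def Rv (i : Fin 4) (v : V) : V :=
  match i with
  | 0 => (comb v.1 v.2.1, v.2)
  | 1 => (v.1, comb v.2.1 (v.2.2.1 - v.1), v.2.2)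
  | 2 => (v.1, v.2.1, comb v.2.2.1 (v.2.2.2 - v.2.1), v.2.2.2)
  | 3 => (v.1, v.2.1, v.2.2.1, comb v.2.2.2 (-v.2.2.1))

lemma toO_comb (p d : E) : toO (comb p d) = (ω - 1) * toO p + ω * toO d := by
  simp only [toO, comb]; push_cast
  linear_combination (-(p.2 : O) - (d.2 : O)) * ω_sq'

lemma toO_sub (p d : E) : toO (p - d) = toO p - toO d := by
  simp only [toO, Prod.fst_sub, Prod.snd_sub]; push_cast; ring

lemma toO_neg (p : E) : toO (-p) = - toO p := by
  simp only [toO, Prod.fst_neg, Prod.snd_neg]; push_cast; ring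

lemma φ_Rv (i : Fin 4) (v : V) : φ (Rv i v) = Rf i (φ v) := by
  fin_cases i <;> funext j <;> fin_cases j <;> simp [Rf, Rv, φ, toO_comb, toO_sub, toO_neg]
  all_goals ring

def app (w : List (Fin 4)) (v : V) : V := w.foldl (fun v i => Rv i v) v

lemma reach_app (w : List (Fin 4)) (v : V) : Reach (φ v) (φ (app w v)) := by
  induction w generalizing v with
  | nil => exact Reach.refl _
  | cons i w ih => exact ((φ_Rv i v) ▸ reach_Rf i (φ v)).trans (ih (Rv i v))

/-- a generic height function -/
def ht : V → ℤ := fun ⟨⟨a1, b1⟩, ⟨a2, b2⟩, ⟨a3, b3⟩, ⟨a4, b4⟩⟩ =>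
  -3 * a1 + 6 * b1 - 7 * a2 + 9 * b2 + 8 * a3 - 3 * b3 + 8 * a4 - 6 * b4

def W : List (List (Fin 4)) :=
  [[0], [1], [2], [3], [1, 1], [3, 3], [0, 2, 1], [1, 1, 0, 0], [3, 3, 2, 2], [2, 1, 3],
   [0, 1, 2, 3], [1, 1, 2, 2]]

def chk2 (n : ℕ) (b : V) : Bool := (T n).all fun t =>
  let v := toV (low t)
  decide (-100 ≤ ht v) && (decide (v = b) || W.any fun w => decide (ht (app w v) < ht v))

lemma low_lift (y : Y) : low (lift y) = y := rfl

lemma reach_base (n : ℕ) (hn : n ≤ 6) (b : V) (hc : chk2 n b = true) (k : ℕ) :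
    ∀ v : V, Q v = n → ht v + 100 ≤ k → Reach (φ v) (φ b) := by
  induction k with
  | zero =>
    intro v hv hk
    have := List.all_eq_true.1 hc _ (mem_T n hn v hv)
    simp only [low_lift, toV_toY] at this
    simp only [Bool.and_eq_true, Bool.or_eq_true, decide_eq_true_eq, List.any_eq_true] at this
    obtain ⟨h1, rfl | ⟨w, hw, hlt⟩⟩ := this
    · exact Reach.refl _
    have hr := reach_app w v
    have hq : Q (app w v) = n := by
      have := reach_psi hr
      rw [psi_φ, psi_φ] at this
      rw [intCast_O_inj _ _ this, hv]
    have := List.all_eq_true.1 hc _ (mem_T n hn _ hq)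
    simp only [low_lift, toV_toY] at this
    simp only [Bool.and_eq_true, decide_eq_true_eq] at this
    have := this.1
    push_cast at hk
    omega
  | succ k ih =>
    intro v hv hk
    have := List.all_eq_true.1 hc _ (mem_T n hn v hv)
    simp only [low_lift, toV_toY] at this
    simp only [Bool.and_eq_true, Bool.or_eq_true, decide_eq_true_eq, List.any_eq_true] at this
    obtain ⟨h1, rfl | ⟨w, hw, hlt⟩⟩ := this
    · exact Reach.refl _
    have hr := reach_app w v
    have hq : Q (app w v) = n := by
      have := reach_psi hr
      rw [psi_φ, psi_φ] at this
      rw [intCast_O_inj _ _ this, hv]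
    push_cast at hk
    exact hr.trans (ih _ hq (by omega))

lemma transitive (n : ℕ) (hn : n ≤ 6) (b : V) (hc : chk2 n b = true) (x y : Fin 4 → O)
    (hx : psi 4 x x = (n : O)) (hy : psi 4 y y = (n : O)) : Reach x y := by
  have key : ∀ x : Fin 4 → O, psi 4 x x = (n : O) → Reach x (φ b) := by
    intro x hx
    obtain ⟨v, rfl⟩ := φ_surj x
    rw [psi_φ] at hx
    exact reach_base n hn b hc (ht v + 100).toNat v (intCast_O_inj _ _ (by exact_mod_cast hx)) (Int.self_le_toNat _)
  exact (key x hx).trans (key y hy).symm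

lemma len_3 : (T 3).length = 240 := by decide +kernel
lemma len_6 : (T 6).length = 2160 := by decide +kernel
lemma chk2_3 : chk2 3 ((1, 0), (1, -2), (-2, 0), (-1, 2)) = true := by decide +kernel
lemma chk2_6 : chk2 6 ((2, 0), (2, -4), (-3, 0), (-1, 2)) = true := by decide +kernel

/-- The 𝒪-lattice `Λ⁴` contains exactly 240 3-vectors and exactly 2160
6-vectors, and `U(Λ⁴)` acts transitively on the set of 3-vectors and on the set of
6-vectors. -/
theorem statement2 :
    Set.ncard {x : Fin 4 → O | psi 4 x x = 3} = 240 ∧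
    Set.ncard {x : Fin 4 → O | psi 4 x x = 6} = 2160 ∧
    (∀ x y : Fin 4 → O, psi 4 x x = 3 → psi 4 y y = 3 →
      ∃ g : (Fin 4 → O) ≃ₗ[O] (Fin 4 → O), IsUnitary 4 g ∧ g x = y) ∧
    (∀ x y : Fin 4 → O, psi 4 x x = 6 → psi 4 y y = 6 →
      ∃ g : (Fin 4 → O) ≃ₗ[O] (Fin 4 → O), IsUnitary 4 g ∧ g x = y) := by
  refine ⟨?_, ?_, ?_, ?_⟩
  · have := count 3 (by norm_num)
    rw [len_3] at this
    exact_mod_cast this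
  · have := count 6 (by norm_num)
    rw [len_6] at this
    exact_mod_cast this
  · intro x y hx hy
    exact transitive 3 (by norm_num) _ chk2_3 x y (by exact_mod_cast hx) (by exact_mod_cast hy)
  · intro x y hx hy
    exact transitive 6 (by norm_num) _ chk2_6 x y (by exact_mod_cast hx) (by exact_mod_cast hy)

end
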